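/- Let t be a closed normal λ-term and T a closed λ-term that is a storage operator for t. Then there exist constants A_{T,t} and B_{T,t} such that for every λ-term θ_t ≃β t, the number of head-reduction steps of (T)θ_t f satisfies n((T)θ_t f) ≤ A_{T,t}·N(θ_t) + B_{T,t}, where N(θ_t) is the number of steps of the left reduction from θ_t to its normal form. -/

import Mathlib

/- Pure untyped λ-calculus with de Bruijn indices. -/

inductive Lam : Type
  | var : ℕ → Lam
  | app : Lam → Lam → Lam
  | abs : Lam → Lam
  deriving DecidableEq

namespace Lam

/-- Renaming of free variables. -/
def rename (ρ : ℕ → ℕ) : Lam → Lam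
  | var i => var (ρ i)
  | app u v => app (u.rename ρ) (v.rename ρ)
  | abs u => abs (u.rename (fun i => match i with | 0 => 0 | j+1 => ρ j + 1))

/-- Lifting of a simultaneous substitution under a binder. -/
def liftSub (σ : ℕ → Lam) : ℕ → Lam
  | 0 => var 0
  | i+1 => (σ i).rename (· + 1)

/-- Simultaneous (capture-avoiding) substitution of the free variables. -/
def subst (σ : ℕ → Lam) : Lam → Lam
  | var i => σ i
  | app u v => app (u.subst σ) (v.subst σ)
  | abs u => abs (u.subst (liftSub σ))

/-- `u.subst0 v` is `u[v/x]` for the first variable. -/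
def subst0 (u v : Lam) : Lam :=
  u.subst (fun i => match i with | 0 => v | j+1 => var j)

/-- One step of β-reduction (anywhere in the term). -/
inductive Beta : Lam → Lam → Prop
  | beta (u v : Lam) : Beta (app (abs u) v) (u.subst0 v)
  | appL {u u'} (v) : Beta u u' → Beta (app u v) (app u' v)
  | appR (u) {v v'} : Beta v v' → Beta (app u v) (app u v')
  | abs {u u'} : Beta u u' → Beta (abs u) (abs u')

/-- β-equivalence `≃β`. -/
def BetaEq : Lam → Lam → Prop := Relation.EqvGen Beta

/-- A term is normal if it has no β-redex. -/
def Normal (t : Lam) : Prop := ∀ u, ¬ Beta t u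

def IsAbs : Lam → Prop
  | abs _ => True
  | _ => False

/-- One step of head reduction: reduction of the head redex. -/
inductive HeadStep : Lam → Lam → Prop
  | beta (u v) : HeadStep (app (abs u) v) (u.subst0 v)
  | appL {u u'} (v) : ¬ u.IsAbs → HeadStep u u' → HeadStep (app u v) (app u' v)
  | abs {u u'} : HeadStep u u' → HeadStep (abs u) (abs u')

/-- `HeadRedN n u v` : `u` head-reduces to `v` in exactly `n` steps (`u ≻ v` with `n(u,v) = n`). -/
inductive HeadRedN : ℕ → Lam → Lam → Prop
  | refl (u) : HeadRedN 0 u u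
  | step {n u v w} : HeadStep u v → HeadRedN n v w → HeadRedN (n+1) u w

/-- `u ≻ v` : `v` is obtained from `u` by some head reductions. -/
def HeadRed (u v : Lam) : Prop := ∃ n, HeadRedN n u v

/-- Head normal form. -/
def HeadNF (t : Lam) : Prop := ∀ u, ¬ HeadStep t u

def ClosedUnder : ℕ → Lam → Prop
  | k, var i => i < k
  | k, app u v => ClosedUnder k u ∧ ClosedUnder k v
  | k, abs u => ClosedUnder (k+1) u

/-- Closed λ-term. -/
def Closed (t : Lam) : Prop := ClosedUnder 0 t

/-- `(f)ⁿx` : `iterApp f n x = (f)(f)…(f)x`. -/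
def iterApp (f : Lam) : ℕ → Lam → Lam
  | 0, x => x
  | n+1, x => app f (iterApp f n x)

/-- The Church integer `n̲ = λxλf(f)ⁿx`. -/
def church (n : ℕ) : Lam := abs (abs (iterApp (var 0) n (var 1)))

/-- `(t)w₁…wₖ`. -/
def appList (t : Lam) (ws : List Lam) : Lam := ws.foldl app t

/-- `T` is a storage operator for the closed normal term `t` :
there is `τ ≃β t` such that for every `θ ≃β t` there is a substitution `σ`
(not touching the fresh variable `f`, represented by the de Bruijn index `0`)
with `(T)θf ≻ (f)σ(τ)`. -/
def IsStorageFor (T t : Lam) : Prop :=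
  Closed T ∧ ∃ τ, BetaEq τ t ∧ ∀ θ, BetaEq θ t →
    ∃ σ : ℕ → Lam, σ 0 = var 0 ∧
      HeadRed (app (app T θ) (var 0)) (app (var 0) (τ.subst σ))

end Lam

namespace Lam

/-- One step of left (leftmost, normal order) reduction. -/
inductive LeftStep : Lam → Lam → Prop
  | beta (u v) : LeftStep (app (abs u) v) (u.subst0 v)
  | abs {u u'} : LeftStep u u' → LeftStep (abs u) (abs u')
  | appL {u u'} (v) : ¬ u.IsAbs → LeftStep u u' → LeftStep (app u v) (app u' v)
  | appR (u) {v v'} : ¬ u.IsAbs → Normal u → LeftStep v v' → LeftStep (app u v) (app u v')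

/-- `LeftRedN n u v` : `u` left-reduces to `v` in exactly `n` steps. -/
inductive LeftRedN : ℕ → Lam → Lam → Prop
  | refl (u) : LeftRedN 0 u u
  | step {n u v w} : LeftStep u v → LeftRedN n v w → LeftRedN (n+1) u w

end Lam

namespace Lam

def upr (ρ : ℕ → ℕ) : ℕ → ℕ
  | 0 => 0
  | j+1 => ρ j + 1

def inst (v : Lam) : ℕ → Lam
  | 0 => v
  | j+1 => var j

theorem rename_abs (ρ : ℕ → ℕ) (u : Lam) : (abs u).rename ρ = abs (u.rename (upr ρ)) := by
  have : (fun i => match i with | 0 => 0 | j+1 => ρ j + 1) = upr ρ := by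
    funext i; cases i <;> rfl
  rw [← this]; rfl

theorem subst0_eq (u v : Lam) : u.subst0 v = u.subst (inst v) := by
  have : (fun i => match i with | 0 => v | j+1 => var j) = inst v := by
    funext i; cases i <;> rfl
  rw [← this]; rfl

theorem rename_rename (u : Lam) : ∀ (ρ ρ' : ℕ → ℕ),
    (u.rename ρ).rename ρ' = u.rename (fun i => ρ' (ρ i)) := by
  induction u with
  | var i => intros; rfl
  | app u v hu hv => intros; simp [rename, hu, hv]
  | abs u hu =>
    intro ρ ρ'
    simp only [rename_abs, hu]
    congr 2
    funext i; cases i <;> rfl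

theorem subst_rename (u : Lam) : ∀ (ρ : ℕ → ℕ) (σ : ℕ → Lam),
    (u.rename ρ).subst σ = u.subst (fun i => σ (ρ i)) := by
  induction u with
  | var i => intros; rfl
  | app u v hu hv => intros; simp [rename, subst, hu, hv]
  | abs u hu =>
    intro ρ σ
    simp only [rename_abs, subst, hu]
    congr 2
    funext i; cases i <;> rfl

theorem rename_subst (u : Lam) : ∀ (σ : ℕ → Lam) (ρ : ℕ → ℕ),
    (u.subst σ).rename ρ = u.subst (fun i => (σ i).rename ρ) := by
  induction u with
  | var i => intros; rfl
  | app u v hu hv => intros; simp [rename, subst, hu, hv]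
  | abs u hu =>
    intro σ ρ
    simp only [rename_abs, subst, hu]
    congr 2
    funext i
    cases i with
    | zero => rfl
    | succ i => simp only [liftSub, rename_rename]; rfl

theorem subst_subst (u : Lam) : ∀ (σ τ : ℕ → Lam),
    (u.subst σ).subst τ = u.subst (fun i => (σ i).subst τ) := by
  induction u with
  | var i => intros; rfl
  | app u v hu hv => intros; simp [subst, hu, hv]
  | abs u hu =>
    intro σ τ
    simp only [subst, hu]
    congr 2
    funext i
    cases i with
    | zero => rfl
    | succ i => simp only [liftSub, subst_rename, rename_subst]

theorem subst_var (u : Lam) : u.subst var = u := by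
  induction u with
  | var i => rfl
  | app u v hu hv => simp [subst, hu, hv]
  | abs u hu =>
    have : liftSub var = var := by funext i; cases i <;> rfl
    simp [subst, this, hu]

theorem subst_subst0 (u v : Lam) (σ : ℕ → Lam) :
    (u.subst0 v).subst σ = (u.subst (liftSub σ)).subst0 (v.subst σ) := by
  simp only [subst0_eq, subst_subst]
  congr 1
  funext i
  cases i with
  | zero => rfl
  | succ i =>
    simp only [liftSub, subst_rename, inst, subst]
    exact (subst_var _).symm

theorem rename_eq_subst (u : Lam) (ρ : ℕ → ℕ) : u.rename ρ = u.subst (fun i => var (ρ i)) := by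
  have := rename_subst u var ρ
  rw [subst_var] at this
  exact this

/- Confluence. -/

inductive Par : Lam → Lam → Prop
  | var (i) : Par (var i) (var i)
  | app {u u' v v'} : Par u u' → Par v v' → Par (app u v) (app u' v')
  | abs {u u'} : Par u u' → Par (abs u) (abs u')
  | beta {u u' v v'} : Par u u' → Par v v' → Par (app (abs u) v) (u'.subst0 v')

theorem Par.rfl' (u : Lam) : Par u u := by
  induction u with
  | var i => exact .var i
  | app _ _ h1 h2 => exact .app h1 h2
  | abs _ h => exact .abs h

theorem Par.of_beta {u v : Lam} (h : Beta u v) : Par u v := by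
  induction h with
  | beta u v => exact .beta (.rfl' _) (.rfl' _)
  | appL v _ ih => exact .app ih (.rfl' _)
  | appR u _ ih => exact .app (.rfl' _) ih
  | abs _ ih => exact .abs ih

theorem rename_subst0 (u v : Lam) (ρ : ℕ → ℕ) :
    (u.subst0 v).rename ρ = (u.rename (upr ρ)).subst0 (v.rename ρ) := by
  rw [rename_eq_subst, subst_subst0, rename_eq_subst u, rename_eq_subst v]
  congr 2
  funext i; cases i <;> rfl

theorem Par.rename {u v : Lam} (h : Par u v) : ∀ ρ, Par (u.rename ρ) (v.rename ρ) := by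
  induction h with
  | var i => intro ρ; exact .var _
  | app _ _ h1 h2 => intro ρ; exact .app (h1 ρ) (h2 ρ)
  | abs _ h => intro ρ; rw [rename_abs, rename_abs]; exact .abs (h _)
  | beta _ _ h1 h2 =>
    intro ρ
    rw [rename_subst0]
    simp only [Lam.rename.eq_2, rename_abs]
    exact .beta (h1 _) (h2 _)

theorem Par.lift {σ τ : ℕ → Lam} (h : ∀ i, Par (σ i) (τ i)) (i : ℕ) :
    Par (liftSub σ i) (liftSub τ i) := by
  cases i with
  | zero => exact .var 0
  | succ i => exact (h i).rename _

theorem Par.subst {u v : Lam} (h : Par u v) : ∀ {σ τ : ℕ → Lam}, (∀ i, Par (σ i) (τ i)) →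
    Par (u.subst σ) (v.subst τ) := by
  induction h with
  | var i => intro σ τ hs; exact hs i
  | app _ _ h1 h2 => intro σ τ hs; exact .app (h1 hs) (h2 hs)
  | abs _ h => intro σ τ hs; exact .abs (h (Par.lift hs))
  | beta _ _ h1 h2 =>
    intro σ τ hs
    rw [subst_subst0]
    exact .beta (h1 (Par.lift hs)) (h2 hs)

theorem Par.subst0 {u u' v v' : Lam} (h : Par u u') (h' : Par v v') :
    Par (u.subst0 v) (u'.subst0 v') := by
  rw [subst0_eq, subst0_eq]
  refine h.subst ?_
  intro i
  cases i with
  | zero => exact h'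
  | succ i => exact .var i

theorem Par.diamond {a b : Lam} (h : Par a b) : ∀ {c}, Par a c → ∃ d, Par b d ∧ Par c d := by
  induction h with
  | var i => intro c hc; exact ⟨c, hc, .rfl' _⟩
  | abs _ ih =>
    intro c hc
    cases hc with
    | abs hc => obtain ⟨d, h1, h2⟩ := ih hc; exact ⟨_, .abs h1, .abs h2⟩
  | app hu hv ihu ihv =>
    intro c hc
    cases hc with
    | app h1 h2 =>
      obtain ⟨d, p, q⟩ := ihu h1
      obtain ⟨e, r, s⟩ := ihv h2
      exact ⟨_, .app p r, .app q s⟩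
    | beta h1 h2 =>
      obtain ⟨e, r, s⟩ := ihv h2
      obtain ⟨d, p, q⟩ := ihu (.abs h1)
      cases hu with
      | abs hu =>
        cases q with
        | abs q =>
          cases p with
          | abs p => exact ⟨_, .beta p r, .subst0 q s⟩
  | beta hu hv ihu ihv =>
    intro c hc
    cases hc with
    | app h1 h2 =>
      obtain ⟨e, r, s⟩ := ihv h2
      cases h1 with
      | abs h1 =>
        obtain ⟨d, p, q⟩ := ihu h1
        exact ⟨_, .subst0 p r, .beta q s⟩
    | beta h1 h2 =>
      obtain ⟨d, p, q⟩ := ihu h1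
      obtain ⟨e, r, s⟩ := ihv h2
      exact ⟨_, .subst0 p r, .subst0 q s⟩

theorem BetaEq.join {a b : Lam} (h : BetaEq a b) : Relation.Join (Relation.ReflTransGen Par) a b := by
  have heq : Equivalence (Relation.Join (Relation.ReflTransGen Par)) := by
    refine Relation.equivalence_join_reflTransGen ?_
    intro a b c hab hac
    obtain ⟨d, h1, h2⟩ := hab.diamond hac
    exact ⟨d, .single h1, .single h2⟩
  induction h with
  | rel a b h => exact ⟨b, .single (.of_beta h), .refl⟩
  | refl a => exact heq.refl a
  | symm a b _ ih => exact heq.symm ih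
  | trans a b c _ _ h1 h2 => exact heq.trans h1 h2

theorem Normal.par_eq {a b : Lam} (h : Par a b) : Normal a → a = b := by
  induction h with
  | var i => intro _; rfl
  | app _ _ h1 h2 =>
    intro hn
    rw [h1 (fun x hx => hn _ (.appL _ hx)), h2 (fun x hx => hn _ (.appR _ hx))]
  | abs _ h => intro hn; rw [h (fun x hx => hn _ (.abs hx))]
  | beta _ _ _ _ => intro hn; exact absurd (.beta _ _) (hn _)

theorem Normal.pars_eq {a b : Lam} (hn : Normal a) (h : Relation.ReflTransGen Par a b) : a = b := by
  induction h with
  | refl => rfl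
  | tail _ h ih => subst ih; exact hn.par_eq h

theorem BetaEq.normal_eq {a b : Lam} (h : BetaEq a b) (ha : Normal a) (hb : Normal b) : a = b := by
  obtain ⟨c, h1, h2⟩ := h.join
  rw [ha.pars_eq h1, hb.pars_eq h2]

theorem LeftStep.beta' {a b : Lam} (h : LeftStep a b) : Beta a b := by
  induction h with
  | beta u v => exact .beta u v
  | abs _ ih => exact .abs ih
  | appL v _ _ ih => exact .appL v ih
  | appR u _ _ _ ih => exact .appR u ih

theorem LeftRedN.betaEq {n : ℕ} {a b : Lam} (h : LeftRedN n a b) : BetaEq a b := by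
  induction h with
  | refl u => exact .refl u
  | step h _ ih => exact .trans _ _ _ (.rel _ _ h.beta') ih

/- Weak head reduction. -/

inductive WH : Lam → Lam → Prop
  | beta (u v) : WH (app (abs u) v) (u.subst0 v)
  | appL {u u'} (v) : WH u u' → WH (app u v) (app u' v)

inductive WHN : ℕ → Lam → Lam → Prop
  | refl (u) : WHN 0 u u
  | step {n u v w} : WH u v → WHN n v w → WHN (n+1) u w

theorem WH.head {u v : Lam} (h : WH u v) : HeadStep u v := by
  induction h with
  | beta u v => exact .beta u v
  | appL v h ih =>
    refine .appL v ?_ ih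
    cases h <;> exact id

theorem WHN.head {n : ℕ} {u v : Lam} (h : WHN n u v) : HeadRedN n u v := by
  induction h with
  | refl u => exact .refl u
  | step h _ ih => exact .step h.head ih

theorem WHN.appL {n : ℕ} {u v : Lam} (h : WHN n u v) (w : Lam) : WHN n (app u w) (app v w) := by
  induction h with
  | refl u => exact .refl _
  | step h _ ih => exact .step (.appL _ h) ih

theorem WH.subst {u v : Lam} (h : WH u v) (σ : ℕ → Lam) : WH (u.subst σ) (v.subst σ) := by
  induction h with
  | beta u v => rw [subst_subst0]; exact .beta _ _
  | appL v _ ih => exact .appL _ ih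

theorem WHN.subst {n : ℕ} {u v : Lam} (h : WHN n u v) (σ : ℕ → Lam) :
    WHN n (u.subst σ) (v.subst σ) := by
  induction h with
  | refl u => exact .refl _
  | step h _ ih => exact .step (h.subst σ) ih

theorem HeadStep.wh {u v : Lam} (h : HeadStep u v) : ¬ u.IsAbs → WH u v := by
  induction h with
  | beta u v => intro _; exact .beta u v
  | appL v hn _ ih => intro _; exact .appL v (ih hn)
  | abs _ _ => intro h; exact absurd trivial h

theorem HeadRedN.abs {n : ℕ} {u v : Lam} (h : HeadRedN n u v) :
    HeadRedN n (Lam.abs u) (Lam.abs v) := by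
  induction h with
  | refl u => exact .refl _
  | step h _ ih => exact .step (.abs h) ih

theorem HeadRedN.trans {n m : ℕ} {u v w : Lam} (h : HeadRedN n u v) (h' : HeadRedN m v w) :
    HeadRedN (n + m) u w := by
  induction h with
  | refl u => simpa using h'
  | @step n _ _ _ h _ ih =>
    have := HeadRedN.step h (ih h')
    rwa [show n + 1 + m = n + m + 1 by omega]

theorem HeadStep.det {u v : Lam} (h : HeadStep u v) : ∀ {w}, HeadStep u w → v = w := by
  induction h with
  | beta u v =>
    intro w hw
    cases hw with
    | beta => rfl
    | appL _ hn _ => exact absurd trivial hn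
  | appL v hn _ ih =>
    intro w hw
    cases hw with
    | beta => exact absurd trivial hn
    | appL _ _ h => rw [ih h]
  | abs _ ih =>
    intro w hw
    cases hw with
    | abs h => rw [ih h]

theorem HeadRedN.det {n : ℕ} {u v : Lam} (h : HeadRedN n u v) (hv : HeadNF v) :
    ∀ {m w}, HeadRedN m u w → HeadNF w → n = m := by
  induction h with
  | refl u =>
    intro m w hw _
    cases hw with
    | refl => rfl
    | step h _ => exact absurd h (hv _)
  | step h _ ih =>
    intro m w hw hn
    cases hw with
    | refl => exact absurd h (hn _)
    | step h' hw => rw [h.det h'] at ih; rw [ih hv hw hn]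

/- Opening of a box. -/

inductive Neutral : Lam → Prop
  | var (i) : Neutral (var i)
  | app {u} (v) : Neutral u → Neutral (app u v)

theorem Neutral.not_wh {u : Lam} (h : Neutral u) : ∀ v, ¬ WH u v := by
  induction h with
  | var i => intro v hv; cases hv
  | app v hu ih =>
    intro w hw
    cases hw with
    | beta => cases hu
    | appL _ h => exact ih _ h

theorem Normal.neutral : ∀ {u : Lam}, Normal u → ¬ u.IsAbs → Neutral u
  | .var i, _, _ => .var i
  | .abs _, _, h => absurd trivial h
  | .app u v, hn, _ => by
    refine .app v (Normal.neutral (fun x hx => hn _ (.appL _ hx)) ?_)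
    intro h
    cases u with
    | abs u => exact hn _ (.beta _ _)
    | var i => exact h
    | app _ _ => exact h

theorem LeftStep.wh_or {u v : Lam} (h : LeftStep u v) :
    ¬ u.IsAbs → WH u v ∨ Neutral v := by
  induction h with
  | beta u v => intro _; exact .inl (.beta _ _)
  | abs _ _ => intro h; exact absurd trivial h
  | appL v hn _ ih =>
    intro _
    rcases ih hn with h | h
    · exact .inl (.appL _ h)
    · exact .inr (.app _ h)
  | appR u hn hu _ _ => intro _; exact .inr (.app _ (hu.neutral hn))

def Opens (j : ℕ) (a : Lam) : Lam → Prop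
  | var i => ∃ n, n ≤ j ∧ WHN n a (var i)
  | abs b => ∃ n m a', n + m ≤ j ∧ WHN n a (abs a') ∧ LeftRedN m a' b
  | app u v => ∃ n m p a1 a2, n + m ≤ j ∧ n + p ≤ j ∧ WHN n a (app a1 a2) ∧
      LeftRedN m a1 u ∧ LeftRedN p a2 v

theorem Opens.wh {j : ℕ} {a c b : Lam} (h : WH a c) (ho : Opens j c b) : Opens (j+1) a b := by
  cases b with
  | var i =>
    obtain ⟨n, hn, hw⟩ := ho
    exact ⟨n+1, by omega, .step h hw⟩
  | abs b =>
    obtain ⟨n, m, a', hn, hw, hl⟩ := ho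
    exact ⟨n+1, m, a', by omega, .step h hw, hl⟩
  | app u v =>
    obtain ⟨n, m, p, a1, a2, hn, hp, hw, hl⟩ := ho
    exact ⟨n+1, m, p, a1, a2, by omega, by omega, .step h hw, hl⟩

theorem WHN.eq_of_stuck {n : ℕ} {u v : Lam} (h : WHN n u v) (hs : ∀ w, ¬ WH u w) :
    n = 0 ∧ u = v := by
  cases h with
  | refl => exact ⟨rfl, rfl⟩
  | step h _ => exact absurd h (hs _)

theorem LeftRedN.opens {j : ℕ} {a b : Lam} (h : LeftRedN j a b) : Opens j a b := by
  induction h with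
  | refl u =>
    cases u with
    | var i => exact ⟨0, le_rfl, .refl _⟩
    | abs b => exact ⟨0, 0, b, le_rfl, .refl _, .refl _⟩
    | app u v => exact ⟨0, 0, 0, u, v, le_rfl, le_rfl, .refl _, .refl _, .refl _⟩
  | @step n a c b hs hr ih =>
    by_cases hwh : WH a c
    · exact ih.wh hwh
    cases hs with
    | beta u v => exact absurd (.beta u v) hwh
    | abs hs =>
      have stuck : ∀ x w, ¬ WH (Lam.abs x) w := by intro x w h; cases h
      cases b with
      | var i =>
        obtain ⟨n, hn, hw⟩ := ih
        have := (hw.eq_of_stuck (stuck _)).2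
        cases this
      | app u v =>
        obtain ⟨n, m, p, a1, a2, hn, hp, hw, hl⟩ := ih
        have := (hw.eq_of_stuck (stuck _)).2
        cases this
      | abs b =>
        obtain ⟨n, m, a', hn, hw, hl⟩ := ih
        obtain ⟨h0, h1⟩ := hw.eq_of_stuck (stuck _)
        cases h1
        exact ⟨0, m+1, _, by omega, .refl _, .step hs hl⟩
    | @appL u u' v hn hs =>
      have hneu : Neutral (app u' v) := by
        rcases hs.wh_or hn with h | h
        · exact absurd (.appL v h) hwh
        · exact .app _ h
      cases b with
      | var i =>
        obtain ⟨n, hn, hw⟩ := ih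
        have := (hw.eq_of_stuck hneu.not_wh).2
        cases this
      | abs b =>
        obtain ⟨n, m, a', hn, hw, hl⟩ := ih
        have := (hw.eq_of_stuck hneu.not_wh).2
        cases this
      | app u v =>
        obtain ⟨n, m, p, a1, a2, hn, hp, hw, hl, hl'⟩ := ih
        obtain ⟨h0, h1⟩ := hw.eq_of_stuck hneu.not_wh
        cases h1
        exact ⟨0, m+1, p, _, _, by omega, by omega, .refl _, .step hs hl, hl'⟩
    | @appR u v v' hn hu hs =>
      have hneu : Neutral (app u v') := .app _ (hu.neutral hn)
      cases b with
      | var i =>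
        obtain ⟨n, hn, hw⟩ := ih
        have := (hw.eq_of_stuck hneu.not_wh).2
        cases this
      | abs b =>
        obtain ⟨n, m, a', hn, hw, hl⟩ := ih
        have := (hw.eq_of_stuck hneu.not_wh).2
        cases this
      | app u v =>
        obtain ⟨n, m, p, a1, a2, hn, hp, hw, hl, hl'⟩ := ih
        obtain ⟨h0, h1⟩ := hw.eq_of_stuck hneu.not_wh
        cases h1
        exact ⟨0, m, p+1, _, _, by omega, by omega, .refl _, hl, .step hs hl'⟩

/- The slowed-down version of a term: an identity is inserted at every subterm. -/

def hat : Lam → Lam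
  | var i => app (abs (var 0)) (var i)
  | app u v => app (abs (var 0)) (app (hat u) (hat v))
  | abs u => app (abs (var 0)) (abs (hat u))

theorem BetaEq.appC {u u' v v' : Lam} (h : BetaEq u u') (h' : BetaEq v v') :
    BetaEq (app u v) (app u' v') := by
  have h1 : BetaEq (app u v) (app u' v) := by
    induction h with
    | rel a b h => exact .rel _ _ (.appL _ h)
    | refl a => exact .refl _
    | symm a b _ ih => exact .symm _ _ ih
    | trans a b c _ _ h1 h2 => exact .trans _ _ _ h1 h2
  have h2 : BetaEq (app u' v) (app u' v') := by
    clear h1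
    induction h' with
    | rel a b h => exact .rel _ _ (.appR _ h)
    | refl a => exact .refl _
    | symm a b _ ih => exact .symm _ _ ih
    | trans a b c _ _ h1 h2 => exact .trans _ _ _ h1 h2
  exact .trans _ _ _ h1 h2

theorem BetaEq.absC {u u' : Lam} (h : BetaEq u u') : BetaEq (abs u) (abs u') := by
  induction h with
  | rel a b h => exact .rel _ _ (.abs h)
  | refl a => exact .refl _
  | symm a b _ ih => exact .symm _ _ ih
  | trans a b c _ _ h1 h2 => exact .trans _ _ _ h1 h2

theorem betaEq_id (u : Lam) : BetaEq (app (abs (var 0)) u) u :=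
  .rel _ _ (.beta (var 0) u)

theorem hat_betaEq (u : Lam) : BetaEq (hat u) u := by
  induction u with
  | var i => exact betaEq_id _
  | app u v hu hv => exact .trans _ _ _ (betaEq_id _) (BetaEq.appC hu hv)
  | abs u hu => exact .trans _ _ _ (betaEq_id _) (BetaEq.absC hu)

/- The simulation. -/

inductive Sim (k : ℕ) : Lam → Lam → Prop
  | var (i) : Sim k (var i) (var i)
  | app {u u' v v'} : Sim k u u' → Sim k v v' → Sim k (app u v) (app u' v')
  | abs {u u'} : Sim k u u' → Sim k (abs u) (abs u')
  | box {j a b M M'} {σ σ' : ℕ → Lam} : j ≤ k → LeftRedN j a b → (∀ i, Sim k (σ i) (σ' i)) →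
      M = a.subst σ → M' = (hat b).subst σ' → Sim k M M'

variable {k : ℕ}

theorem Sim.rfl' (u : Lam) : Sim k u u := by
  induction u with
  | var i => exact .var i
  | app _ _ h1 h2 => exact .app h1 h2
  | abs _ h => exact .abs h

theorem Sim.rename {u v : Lam} (h : Sim k u v) : ∀ ρ, Sim k (u.rename ρ) (v.rename ρ) := by
  induction h with
  | var i => intro ρ; exact .var _
  | app _ _ h1 h2 => intro ρ; exact .app (h1 ρ) (h2 ρ)
  | abs _ h => intro ρ; rw [rename_abs, rename_abs]; exact .abs (h _)
  | box hj hl _ hM hM' ih =>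
    intro ρ
    subst hM hM'
    exact .box hj hl (fun i => ih i ρ) (rename_subst _ _ _) (rename_subst _ _ _)

theorem Sim.lift {σ τ : ℕ → Lam} (h : ∀ i, Sim k (σ i) (τ i)) (i : ℕ) :
    Sim k (liftSub σ i) (liftSub τ i) := by
  cases i with
  | zero => exact .var 0
  | succ i => exact (h i).rename _

theorem Sim.subst {u v : Lam} (h : Sim k u v) : ∀ {σ τ : ℕ → Lam}, (∀ i, Sim k (σ i) (τ i)) →
    Sim k (u.subst σ) (v.subst τ) := by
  induction h with
  | var i => intro σ τ hs; exact hs i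
  | app _ _ h1 h2 => intro σ τ hs; exact .app (h1 hs) (h2 hs)
  | abs _ h => intro σ τ hs; exact .abs (h (Sim.lift hs))
  | box hj hl _ hM hM' ih =>
    intro σ τ hs
    subst hM hM'
    exact .box hj hl (fun i => ih i hs) (subst_subst _ _ _) (subst_subst _ _ _)

theorem Sim.subst0 {u u' v v' : Lam} (h : Sim k u u') (h' : Sim k v v') :
    Sim k (u.subst0 v) (u'.subst0 v') := by
  rw [subst0_eq, subst0_eq]
  refine h.subst ?_
  intro i
  cases i with
  | zero => exact h'
  | succ i => exact .var i

theorem hat_subst (b : Lam) (σ : ℕ → Lam) :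
    ∃ c, (hat b).subst σ = Lam.app (Lam.abs (Lam.var 0)) c := by
  cases b <;> exact ⟨_, rfl⟩

theorem Sim.abs_inv {M u' : Lam} (h : Sim k M (Lam.abs u')) :
    ∃ u, M = Lam.abs u ∧ Sim k u u' := by
  cases h with
  | abs h => exact ⟨_, rfl, h⟩
  | @box _ _ b _ _ _ σ' _ _ _ _ h =>
    obtain ⟨c, hc⟩ := hat_subst b σ'
    rw [hc] at h
    cases h

theorem Sim.open_box {j : ℕ} {a b N' : Lam} {σ σ' : ℕ → Lam} (hj : j ≤ k) (hl : LeftRedN j a b)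
    (hs : ∀ i, Sim k (σ i) (σ' i)) (h : WH ((hat b).subst σ') N') :
    ∃ n N, n ≤ k + 1 ∧ WHN n (a.subst σ) N ∧ Sim k N N' := by
  have ho := hl.opens
  cases b with
  | var i =>
    obtain ⟨n, hn, hw⟩ := ho
    cases h with
    | appL _ h => cases h
    | beta => exact ⟨n, _, by omega, hw.subst σ, hs i⟩
  | abs b =>
    obtain ⟨n, m, a', hn, hw, hl⟩ := ho
    cases h with
    | appL _ h => cases h
    | beta =>
      exact ⟨n, _, by omega, hw.subst σ,
        .abs (.box (by omega : m ≤ k) hl (Sim.lift hs) rfl rfl)⟩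
  | app u v =>
    obtain ⟨n, m, p, a1, a2, hn, hp, hw, hl, hl'⟩ := ho
    cases h with
    | appL _ h => cases h
    | beta =>
      exact ⟨n, _, by omega, hw.subst σ,
        .app (.box (by omega : m ≤ k) hl hs rfl rfl) (.box (by omega : p ≤ k) hl' hs rfl rfl)⟩

theorem Sim.wh {M' N' : Lam} (h : WH M' N') : ∀ {M}, Sim k M M' →
    ∃ n N, n ≤ k + 1 ∧ WHN n M N ∧ Sim k N N' := by
  induction h with
  | beta u v =>
    intro M hM
    cases hM with
    | app h1 h2 =>
      obtain ⟨u0, rfl, hu⟩ := h1.abs_inv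
      exact ⟨1, _, by omega, .step (.beta _ _) (.refl _), hu.subst0 h2⟩
    | box hj hl hs hM hM' =>
      subst hM
      exact Sim.open_box hj hl hs (hM' ▸ WH.beta u v)
  | appL v h ih =>
    intro M hM
    cases hM with
    | app h1 h2 =>
      obtain ⟨n, N, hn, hw, hN⟩ := ih h1
      exact ⟨n, _, hn, hw.appL _, .app hN h2⟩
    | box hj hl hs hM hM' =>
      subst hM
      exact Sim.open_box hj hl hs (hM' ▸ WH.appL v h)

theorem Sim.head {M' N' : Lam} (h : HeadStep M' N') : ∀ {M}, Sim k M M' →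
    ∃ n N, n ≤ k + 1 ∧ HeadRedN n M N ∧ Sim k N N' := by
  induction h with
  | abs _ ih =>
    intro M hM
    obtain ⟨u, rfl, hu⟩ := hM.abs_inv
    obtain ⟨n, N, hn, hw, hN⟩ := ih hu
    exact ⟨n, _, hn, hw.abs, .abs hN⟩
  | beta u v =>
    intro M hM
    obtain ⟨n, N, hn, hw, hN⟩ := Sim.wh (.beta u v) hM
    exact ⟨n, N, hn, hw.head, hN⟩
  | appL v hn h _ =>
    intro M hM
    obtain ⟨n, N, hn, hw, hN⟩ := Sim.wh (.appL v (h.wh hn)) hM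
    exact ⟨n, N, hn, hw.head, hN⟩

theorem Sim.headN {c : ℕ} {M' N' : Lam} (h : HeadRedN c M' N') : ∀ {M}, Sim k M M' →
    ∃ n N, n ≤ (k + 1) * c ∧ HeadRedN n M N ∧ Sim k N N' := by
  induction h with
  | refl u => intro M hM; exact ⟨0, M, by omega, .refl _, hM⟩
  | @step c _ _ _ h _ ih =>
    intro M hM
    obtain ⟨n, N, hn, hw, hN⟩ := Sim.head h hM
    obtain ⟨n2, N2, hn2, hw2, hN2⟩ := ih hN
    refine ⟨n + n2, N2, ?_, hw.trans hw2, hN2⟩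
    rw [Nat.mul_add, Nat.mul_one]; omega

theorem Sim.progress {M M' : Lam} (h : Sim k M M') : ∀ {N}, HeadStep M N →
    ∃ N', HeadStep M' N' := by
  have key : ∀ (X v : Lam), (X.IsAbs ∨ ∃ Y, HeadStep X Y) → ∃ N', HeadStep (Lam.app X v) N' := by
    intro X v hX
    by_cases ha : X.IsAbs
    · cases X with
      | abs u => exact ⟨_, .beta _ _⟩
      | var i => exact absurd ha id
      | app _ _ => exact absurd ha id
    · rcases hX with h | ⟨Y, hY⟩
      · exact absurd h ha
      · exact ⟨_, .appL v ha hY⟩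
  induction h with
  | var i => intro N h; cases h
  | abs _ ih =>
    intro N h
    cases h with
    | abs h => obtain ⟨N', h'⟩ := ih h; exact ⟨_, .abs h'⟩
  | app h1 h2 ih1 _ =>
    intro N h
    refine key _ _ ?_
    cases h with
    | appL _ _ h => exact .inr (ih1 h)
    | beta u v =>
      cases h1 with
      | abs _ => exact .inl trivial
      | @box _ _ b _ _ _ σ' _ _ _ _ h =>
        obtain ⟨c, hc⟩ := hat_subst b σ'
        rw [h, hc]
        exact .inr ⟨_, .beta _ _⟩
  | @box _ _ b _ _ _ σ' _ _ _ _ h =>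
    intro _ _
    obtain ⟨c, hc⟩ := hat_subst b σ'
    rw [h, hc]
    exact ⟨_, .beta _ _⟩

end Lam

open Lam in
/-- Linear bound on the number of head-reduction steps of `(T)θf` in terms of the
number `N(θ)` of left-reduction steps from `θ` to its normal form. -/
theorem stmt10 (t T : Lam) (ht : Closed t) (hnt : Normal t)
    (hstor : IsStorageFor T t) :
    ∃ A B : ℕ, ∀ θ : Lam, BetaEq θ t →
      ∀ (k : ℕ) (u : Lam), LeftRedN k θ u → Normal u →
        ∀ (m : ℕ) (w : Lam),
          HeadRedN m (app (app T θ) (var 0)) w → HeadNF w →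
            m ≤ A * k + B := by
  obtain ⟨_, τ, _, hτ⟩ := hstor
  obtain ⟨σ, _, c, hc⟩ := hτ (hat t) (hat_betaEq t)
  refine ⟨c, c, ?_⟩
  intro θ hθ k u hk hu m w hm hw
  have hut : u = t :=
    BetaEq.normal_eq (.trans _ _ _ (.symm _ _ hk.betaEq) hθ) hu hnt
  subst hut
  have hsim : Sim k (app (app T θ) (var 0)) (app (app T (hat u)) (var 0)) :=
    .app (.app (.rfl' _) (.box le_rfl hk (fun i => .var i) (subst_var _).symm (subst_var _).symm))
      (.var 0)
  obtain ⟨n, N, hn, hred, hN⟩ := Sim.headN hc hsim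
  have hnf : HeadNF N := by
    intro x hx
    obtain ⟨y, hy⟩ := hN.progress hx
    cases hy with
    | appL _ _ h => cases h
  have := hm.det hw hred hnf
  subst this
  calc m ≤ (k + 1) * c := hn
    _ = c * k + c := by ring
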